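/- (Sharpness of the Hörmander condition, Euclidean version of Proposition 2, necessity) Let φ be a function of the class 𝓜 with ∫₁^{+∞} dt/(t φ(t)²) = ∞ and let n ≥ 1. Then there exists a Lebesgue measurable function g : ℝⁿ → [0,∞) such that ∫_{ℝⁿ} ⟨ξ⟩^{n} φ(⟨ξ⟩)² g(ξ)² dξ < ∞ but ∫_{ℝⁿ} g(ξ) dξ = ∞; that is, the weighted space L²(⟨ξ⟩^{n} φ(⟨ξ⟩)² dξ) is not contained in L¹(ℝⁿ), so the embedding H^{n/2,φ}(ℝⁿ) ↪ C(ℝⁿ)∩L^∞(ℝⁿ) fails. -/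

import Mathlib

open MeasureTheory Filter Topology

/-- The class `𝓜` of Borel measurable functions `φ : [1,∞) → (0,∞)` such that `φ` and `1/φ`
are bounded on every interval `[1,b]`, `1 < b < ∞`, and `φ` is slowly varying at `+∞`
in Karamata's sense. (We model `φ` as a function on all of `ℝ`; only its values on
`[1,∞)` matter.) -/
def SlowlyVaryingM (φ : ℝ → ℝ) : Prop :=
  Measurable φ ∧
  (∀ t : ℝ, 1 ≤ t → 0 < φ t) ∧
  (∀ b : ℝ, 1 < b → ∃ C : ℝ, 0 < C ∧ ∀ t ∈ Set.Icc (1:ℝ) b, φ t ≤ C ∧ 1 / φ t ≤ C) ∧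
  (∀ lam : ℝ, 0 < lam → Tendsto (fun t : ℝ => φ (lam * t) / φ t) atTop (𝓝 1))


/-- The "Japanese bracket" `⟨ξ⟩ := (1 + |ξ|²)^{1/2}` of a point `ξ ∈ ℝⁿ`. -/
noncomputable def jbracket {n : ℕ} (ξ : EuclideanSpace ℝ (Fin n)) : ℝ :=
  Real.sqrt (1 + ‖ξ‖ ^ 2)

/-!
The reciprocal weight `w⁻¹ = ⟨ξ⟩⁻ⁿ φ(⟨ξ⟩)⁻²` has infinite integral: in polar coordinates, after the
substitution `t = √(1 + r²)`, its integral dominates a multiple of the tail of `∫ dt / (t φ(t)²)`.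
An infinite σ-finite measure carries a function in `L²` but not in `L¹`; taking such an `f` for the
measure `w⁻¹ dξ`, the function `g = f / w` satisfies `∫ w g² = ∫ f² w⁻¹ < ∞` and
`∫ g = ∫ f w⁻¹ = ∞`.
-/

open Set Module
open scoped ENNReal

section ConverseHolder

variable {α : Type*} [MeasurableSpace α] {p q : ℝ}

theorem exists_lintegral_rpow_le_le_lintegral (hp : 1 < p) (μ : Measure α) [SigmaFinite μ]
    (hμ : μ univ = ∞) {ε C : ℝ≥0∞} (hε : ε ≠ 0) (hε_top : ε ≠ ∞) (hC : C ≠ ∞) :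
    ∃ f : α → ℝ≥0∞, Measurable f ∧ ∫⁻ x, f x ^ p ∂μ ≤ ε ∧ C ≤ ∫⁻ x, f x ∂μ := by
  have hpq := Real.HolderConjugate.conjExponent hp
  set q := p.conjExponent
  let δ : ℝ≥0∞ := ε ^ p⁻¹
  have hδ : δ ≠ 0 := by simp [δ, hε, hε_top]
  have hδ_top : δ ≠ ∞ := ENNReal.rpow_ne_top_of_nonneg hpq.inv_pos.le hε_top
  obtain ⟨s, hs, -, hs_large, hs_fin⟩ :
      ∃ s, MeasurableSet s ∧ s ⊆ univ ∧ (C / δ) ^ q < μ s ∧ μ s < ∞ :=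
    Measure.exists_subset_measure_lt_top .univ <| hμ ▸
      ENNReal.rpow_lt_top_of_nonneg hpq.symm.nonneg (ENNReal.div_ne_top hC hδ)
  have hs_pos : μ s ≠ 0 := (zero_le.trans_lt hs_large).ne'
  let a : ℝ≥0∞ := δ * μ s ^ (-p⁻¹)
  refine ⟨s.indicator fun _ ↦ a, measurable_const.indicator hs, le_of_eq ?_, ?_⟩
  · calc
      ∫⁻ x, s.indicator (fun _ ↦ a) x ^ p ∂μ = ∫⁻ x, s.indicator (fun _ ↦ a ^ p) x ∂μ := by
        simp only [indicator, ENNReal.zero_rpow_of_pos hpq.pos, apply_ite (· ^ p)]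
      _ = a ^ p * μ s := lintegral_indicator_const hs _
      _ = ε * ((μ s)⁻¹ * μ s) := by
        rw [ENNReal.mul_rpow_of_nonneg _ _ hpq.nonneg, ENNReal.rpow_inv_rpow hpq.ne_zero,
          ← ENNReal.rpow_mul, neg_mul, inv_mul_cancel₀ hpq.ne_zero, ENNReal.rpow_neg_one, mul_assoc]
      _ = ε := by rw [ENNReal.inv_mul_cancel hs_pos hs_fin.ne, mul_one]
  · calc
      C = δ * (C / δ) := (ENNReal.mul_div_cancel hδ hδ_top).symm
      _ ≤ δ * μ s ^ q⁻¹ := by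
        gcongr
        exact (ENNReal.le_rpow_inv_iff hpq.symm.pos).2 hs_large.le
      _ = a * μ s := by
        rw [← hpq.one_sub_inv, sub_eq_neg_add, ENNReal.rpow_add _ _ hs_pos hs_fin.ne,
          ENNReal.rpow_one, mul_assoc]
      _ = ∫⁻ x, s.indicator (fun _ ↦ a) x ∂μ := (lintegral_indicator_const hs _).symm

theorem exists_lintegral_rpow_lt_top_lintegral_eq_top (hp : 1 < p) (μ : Measure α) [SigmaFinite μ]
    (hμ : μ univ = ∞) :
    ∃ f : α → ℝ≥0∞, Measurable f ∧ ∫⁻ x, f x ^ p ∂μ < ∞ ∧ ∫⁻ x, f x ∂μ = ∞ := by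
  have hp0 : 0 < p := one_pos.trans hp
  choose f hf hfp hf_large using fun j : ℕ ↦
    exists_lintegral_rpow_le_le_lintegral hp μ hμ (ε := 2⁻¹ ^ j) (C := j)
      (by simp) (by finiteness) (by simp)
  -- Adding `p`-th powers makes the `p`-th moments add up exactly and still dominates every `f j`.
  refine ⟨fun x ↦ (∑' j, f j x ^ p) ^ p⁻¹,
    (Measurable.tsum fun j ↦ (hf j).pow_const p).pow_const _, ?_, ?_⟩
  · calc
      ∫⁻ x, ((∑' j, f j x ^ p) ^ p⁻¹) ^ p ∂μ = ∑' j, ∫⁻ x, f j x ^ p ∂μ := by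
        simp only [ENNReal.rpow_inv_rpow hp0.ne']
        exact lintegral_tsum fun j ↦ ((hf j).pow_const p).aemeasurable
      _ ≤ ∑' j : ℕ, 2⁻¹ ^ j := ENNReal.tsum_le_tsum hfp
      _ < ∞ := by simp [ENNReal.tsum_geometric]
  · refine ENNReal.eq_top_of_forall_nnreal_le fun r ↦ ?_
    obtain ⟨j, hj⟩ := exists_nat_ge r
    calc
      (r : ℝ≥0∞) ≤ j := mod_cast hj
      _ ≤ ∫⁻ x, f j x ∂μ := hf_large j
      _ ≤ ∫⁻ x, (∑' j, f j x ^ p) ^ p⁻¹ ∂μ :=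
        lintegral_mono fun x ↦ (ENNReal.le_rpow_inv_iff hp0).2 (ENNReal.le_tsum j)

theorem exists_real_lintegral_rpow_lt_top_lintegral_eq_top (hp : 1 < p) (μ : Measure α)
    [SigmaFinite μ] (hμ : μ univ = ∞) :
    ∃ f : α → ℝ, Measurable f ∧ (∀ x, 0 ≤ f x) ∧
      ∫⁻ x, .ofReal (f x ^ p) ∂μ < ∞ ∧ ∫⁻ x, .ofReal (f x) ∂μ = ∞ := by
  obtain ⟨f, hf, hfp, hf_top⟩ := exists_lintegral_rpow_lt_top_lintegral_eq_top hp μ hμ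
  have hp0 : 0 < p := one_pos.trans hp
  have hf_fin : ∀ᵐ x ∂μ, f x ≠ ∞ := by
    filter_upwards [ae_lt_top (hf.pow_const p) hfp.ne] with x hx
    exact ((ENNReal.rpow_lt_top_iff_of_pos hp0).1 hx).ne
  refine ⟨fun x ↦ (f x).toReal, hf.ennreal_toReal, fun _ ↦ ENNReal.toReal_nonneg, ?_, ?_⟩
  · refine (lintegral_congr_ae ?_).trans_lt hfp
    filter_upwards [hf_fin] with x hx
    rw [← ENNReal.ofReal_rpow_of_nonneg ENNReal.toReal_nonneg hp0.le, ENNReal.ofReal_toReal hx]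
  · refine (lintegral_congr_ae ?_).trans hf_top
    filter_upwards [hf_fin] with x hx using ENNReal.ofReal_toReal hx

theorem exists_lintegral_mul_rpow_lt_top_lintegral_eq_top (hpq : p.HolderConjugate q)
    (μ : Measure α) [SigmaFinite μ] {w : α → ℝ} (hw : Measurable w) (hw_pos : ∀ x, 0 < w x)
    (hw_top : ∫⁻ x, .ofReal (w x ^ (1 - q)) ∂μ = ∞) :
    ∃ g : α → ℝ, Measurable g ∧ (∀ x, 0 ≤ g x) ∧
      ∫⁻ x, .ofReal (w x * g x ^ p) ∂μ < ∞ ∧ ∫⁻ x, .ofReal (g x) ∂μ = ∞ := by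
  let v (x : α) : ℝ := w x ^ (1 - q)
  have hv : Measurable v := hw.pow_const _
  have hv_nonneg (x : α) : 0 ≤ v x := Real.rpow_nonneg (hw_pos x).le _
  have hwv (x : α) : w x * v x ^ p = v x := by
    have hexp : 1 + (1 - q) * p = 1 - q := by linarith [hpq.mul_eq_add]
    rw [← Real.rpow_mul (hw_pos x).le, ← Real.rpow_one_add' (hw_pos x).le] <;> rw [hexp]
    exact (sub_neg.2 hpq.symm.lt).ne
  let ν : Measure α := μ.withDensity fun x ↦ .ofReal (v x)
  have lintegral_ν {u : α → ℝ} (hu : Measurable u) :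
      ∫⁻ x, .ofReal (u x) ∂ν = ∫⁻ x, .ofReal (v x * u x) ∂μ := by
    rw [lintegral_withDensity_eq_lintegral_mul _ hv.ennreal_ofReal hu.ennreal_ofReal]
    simp only [Pi.mul_apply, ENNReal.ofReal_mul (hv_nonneg _)]
  have hν : ν univ = ∞ := by
    rwa [withDensity_apply _ .univ, Measure.restrict_univ]
  obtain ⟨f, hf, hf_nonneg, hfp, hf_top⟩ :=
    exists_real_lintegral_rpow_lt_top_lintegral_eq_top hpq.lt ν hν
  rw [lintegral_ν (hf.pow_const p)] at hfp
  rw [lintegral_ν hf] at hf_top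
  refine ⟨fun x ↦ v x * f x, hv.mul hf, fun x ↦ mul_nonneg (hv_nonneg x) (hf_nonneg x), ?_, hf_top⟩
  simpa only [Real.mul_rpow (hv_nonneg _) (hf_nonneg _), ← mul_assoc, hwv] using hfp

end ConverseHolder

section Radial

variable {E : Type*} [NormedAddCommGroup E] [NormedSpace ℝ E] [FiniteDimensional ℝ E]
  [Nontrivial E] [MeasurableSpace E] [BorelSpace E] (μ : Measure E) [μ.IsAddHaarMeasure]

theorem lintegral_fun_norm_addHaar {f : ℝ → ℝ≥0∞} (hf : Measurable f) :
    ∫⁻ x, f ‖x‖ ∂μ =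
      μ.toSphere univ * ∫⁻ r in Ioi (0 : ℝ), .ofReal (r ^ (finrank ℝ E - 1)) * f r := calc
  ∫⁻ x, f ‖x‖ ∂μ = ∫⁻ x : ({0}ᶜ : Set E), f ‖x.1‖ ∂μ.comap (↑) := by
    rw [lintegral_subtype_comap (measurableSet_singleton 0).compl fun x ↦ f ‖x‖,
      restrict_compl_singleton]
  _ = ∫⁻ x, f x.2 ∂μ.toSphere.prod (.volumeIoiPow (finrank ℝ E - 1)) := by
    simpa using μ.measurePreserving_homeomorphUnitSphereProd.lintegral_comp
      (f := fun x ↦ f x.2) (by fun_prop)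
  _ = μ.toSphere univ * ∫⁻ r : Ioi (0 : ℝ), f r ∂.volumeIoiPow (finrank ℝ E - 1) := by
    rw [lintegral_prod _ (by fun_prop)]
    simp only [lintegral_const, mul_comm]
  _ = _ := by
    rw [Measure.volumeIoiPow, lintegral_withDensity_eq_lintegral_mul _ (by fun_prop) (by fun_prop),
      ← lintegral_subtype_comap measurableSet_Ioi]
    rfl

end Radial

section JapaneseBracket

theorem strictMonoOn_sqrt_one_add_sq : StrictMonoOn (fun r : ℝ ↦ √(1 + r ^ 2)) (Ici 0) := by
  intro r (hr : 0 ≤ r) s _ hrs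
  dsimp only
  gcongr

theorem image_sqrt_one_add_sq_Ioi {ρ : ℝ} (hρ : 0 ≤ ρ) :
    (fun r : ℝ ↦ √(1 + r ^ 2)) '' Ioi ρ = Ioi √(1 + ρ ^ 2) := by
  refine Subset.antisymm ?_ fun t (ht : √(1 + ρ ^ 2) < t) ↦ ?_
  · rintro _ ⟨r, hr : ρ < r, rfl⟩
    exact strictMonoOn_sqrt_one_add_sq hρ (hρ.trans hr.le) hr
  · have ht0 : 0 < t := (Real.sqrt_nonneg _).trans_lt ht
    have hρt : ρ ^ 2 < t ^ 2 - 1 := by linarith [(Real.sqrt_lt' ht0).1 ht]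
    refine ⟨√(t ^ 2 - 1), Real.lt_sqrt_of_sq_lt hρt, ?_⟩
    simp only [Real.sq_sqrt ((sq_nonneg ρ).trans hρt.le), add_sub_cancel, Real.sqrt_sq ht0.le]

theorem hasDerivAt_sqrt_one_add_sq (r : ℝ) :
    HasDerivAt (fun r : ℝ ↦ √(1 + r ^ 2)) (r / √(1 + r ^ 2)) r := by
  have h : HasDerivAt (fun r : ℝ ↦ 1 + r ^ 2) (2 * r) r := by
    simpa using (hasDerivAt_pow 2 r).const_add 1
  simpa only [mul_div_mul_left _ _ (two_ne_zero' ℝ)] using h.sqrt (by positivity)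

theorem lintegral_Ioi_sqrt_one_add_sq {ρ : ℝ} (hρ : 0 ≤ ρ) (u : ℝ → ℝ≥0∞) :
    ∫⁻ t in Ioi √(1 + ρ ^ 2), u t =
      ∫⁻ r in Ioi ρ, .ofReal (r / √(1 + r ^ 2)) * u √(1 + r ^ 2) := by
  rw [← image_sqrt_one_add_sq_Ioi hρ]
  exact lintegral_image_eq_lintegral_deriv_mul_of_monotoneOn measurableSet_Ioi
    (fun r _ ↦ (hasDerivAt_sqrt_one_add_sq r).hasDerivWithinAt)
    (strictMonoOn_sqrt_one_add_sq.monotoneOn.mono (Ioi_subset_Ici hρ)) u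

theorem sqrt_one_add_sq_le_mul {ρ r : ℝ} (hρ : 0 < ρ) (hr : ρ ≤ r) :
    √(1 + r ^ 2) ≤ √(1 + ρ ^ 2) / ρ * r := by
  have hr0 : 0 < r := hρ.trans_le hr
  rw [div_mul_eq_mul_div, le_div_iff₀ hρ]
  rw [← pow_le_pow_iff_left₀ (by positivity) (by positivity) two_ne_zero]
  rw [mul_pow, mul_pow, Real.sq_sqrt (by positivity), Real.sq_sqrt (by positivity)]
  have : ρ ^ 2 ≤ r ^ 2 := by gcongr
  linarith

theorem lintegral_Ioi_pow_mul_le_sqrt_one_add_sq {ρ : ℝ} (hρ : 0 < ρ) (k : ℕ) (F : ℝ → ℝ≥0∞) :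
    ∫⁻ t in Ioi √(1 + ρ ^ 2), .ofReal (t ^ k) * F t ≤
      .ofReal ((√(1 + ρ ^ 2) / ρ) ^ k) * ∫⁻ r in Ioi ρ, .ofReal (r ^ k) * F √(1 + r ^ 2) := by
  rw [lintegral_Ioi_sqrt_one_add_sq hρ.le, ← lintegral_const_mul' _ _ ENNReal.ofReal_ne_top]
  refine setLIntegral_mono' measurableSet_Ioi fun r (hr : ρ < r) ↦ ?_
  have hr0 : 0 < r := hρ.trans hr
  have jacobian_le_one : r / √(1 + r ^ 2) ≤ 1 :=
    div_le_one_of_le₀ (Real.le_sqrt_of_sq_le (by linarith)) (Real.sqrt_nonneg _)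
  rw [← mul_assoc, ← mul_assoc, ← ENNReal.ofReal_mul (by positivity),
    ← ENNReal.ofReal_mul (by positivity), ← mul_pow]
  gcongr
  calc
    r / √(1 + r ^ 2) * √(1 + r ^ 2) ^ k ≤ 1 * √(1 + r ^ 2) ^ k := by gcongr
    _ ≤ (√(1 + ρ ^ 2) / ρ * r) ^ k := by
      rw [one_mul]
      gcongr
      exact sqrt_one_add_sq_le_mul hρ hr.le

theorem lintegral_sqrt_one_add_norm_sq_eq_top {E : Type*} [NormedAddCommGroup E] [NormedSpace ℝ E]
    [FiniteDimensional ℝ E] [Nontrivial E] [MeasurableSpace E] [BorelSpace E] (μ : Measure E)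
    [μ.IsAddHaarMeasure] {F : ℝ → ℝ≥0∞} (hF : Measurable F) {a : ℝ} (ha : 1 < a)
    (hF_top : ∫⁻ t in Ioi a, .ofReal (t ^ (finrank ℝ E - 1)) * F t = ∞) :
    ∫⁻ x, F √(1 + ‖x‖ ^ 2) ∂μ = ∞ := by
  obtain ⟨ρ, hρ, rfl⟩ : ∃ ρ, 0 < ρ ∧ √(1 + ρ ^ 2) = a := by
    have ha2 : 0 < a ^ 2 - 1 := by nlinarith
    refine ⟨√(a ^ 2 - 1), Real.sqrt_pos.2 ha2, ?_⟩
    rw [Real.sq_sqrt ha2.le, add_sub_cancel, Real.sqrt_sq (by linarith)]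
  have tail_eq_top :
      ∫⁻ r in Ioi ρ, .ofReal (r ^ (finrank ℝ E - 1)) * F √(1 + r ^ 2) = ∞ := by
    by_contra h
    exact ENNReal.mul_ne_top ENNReal.ofReal_ne_top h <|
      top_le_iff.1 <| hF_top ▸ lintegral_Ioi_pow_mul_le_sqrt_one_add_sq hρ _ F
  rw [lintegral_fun_norm_addHaar μ (f := fun r ↦ F √(1 + r ^ 2)) (by fun_prop)]
  refine ENNReal.mul_eq_top.2 <| .inl ⟨?_, ?_⟩
  · exact Measure.measure_univ_ne_zero.2 μ.toSphere_ne_zero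
  · exact top_le_iff.1 <| tail_eq_top ▸ lintegral_mono_set (Ioi_subset_Ioi hρ.le)

end JapaneseBracket

theorem SlowlyVaryingM.lintegral_Ioi_eq_top {φ : ℝ → ℝ} (hφ : SlowlyVaryingM φ)
    (hH : ∫⁻ t in Ioi (1 : ℝ), .ofReal (1 / (t * φ t ^ 2)) = ∞) {b : ℝ} (hb : 1 < b) :
    ∫⁻ t in Ioi b, .ofReal (1 / (t * φ t ^ 2)) = ∞ := by
  obtain ⟨-, hφ_pos, hφ_bdd, -⟩ := hφ
  obtain ⟨C, -, hC⟩ := hφ_bdd b hb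
  have head_lt_top : ∫⁻ t in Ioc 1 b, .ofReal (1 / (t * φ t ^ 2)) < ∞ := by
    refine setLIntegral_lt_top_of_le_nnreal measure_Ioc_lt_top.ne
      ⟨(C ^ 2).toNNReal, fun t ht ↦ ENNReal.ofReal_le_ofReal ?_⟩
    have hφt : 0 < φ t := hφ_pos t ht.1.le
    calc
      1 / (t * φ t ^ 2) ≤ 1 / (1 * φ t ^ 2) := by
        gcongr
        exact ht.1.le
      _ = (1 / φ t) ^ 2 := by rw [one_mul, one_div_pow]
      _ ≤ C ^ 2 := by
        gcongr
        exact (hC t ⟨ht.1.le, ht.2⟩).2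
  rw [← Ioc_union_Ioi_eq_Ioi hb.le, lintegral_union measurableSet_Ioi (Ioc_disjoint_Ioi le_rfl)]
    at hH
  exact (ENNReal.add_eq_top.1 hH).resolve_left head_lt_top.ne

theorem exists_not_integrable_of_hormander_condition_fails_general {E : Type*}
    [NormedAddCommGroup E] [NormedSpace ℝ E] [FiniteDimensional ℝ E] [Nontrivial E]
    [MeasurableSpace E] [BorelSpace E] (μ : Measure E) [μ.IsAddHaarMeasure] {φ : ℝ → ℝ}
    (hφ : Measurable φ) (hφ_ne : ∀ t, 1 ≤ t → φ t ≠ 0) {a : ℝ} (ha : 1 < a)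
    (hH : ∫⁻ t in Ioi a, .ofReal (1 / (t * φ t ^ 2)) = ∞) :
    ∃ g : E → ℝ, Measurable g ∧ (∀ ξ, 0 ≤ g ξ) ∧
      ∫⁻ ξ, .ofReal (√(1 + ‖ξ‖ ^ 2) ^ (finrank ℝ E : ℝ) * φ √(1 + ‖ξ‖ ^ 2) ^ 2 * g ξ ^ 2) ∂μ < ∞ ∧
      ∫⁻ ξ, .ofReal (g ξ) ∂μ = ∞ := by
  let weight (t : ℝ) : ℝ := t ^ finrank ℝ E * φ t ^ 2
  have hweight : Measurable weight := by fun_prop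
  have hweight_pos (ξ : E) : 0 < weight √(1 + ‖ξ‖ ^ 2) := by
    have := hφ_ne √(1 + ‖ξ‖ ^ 2) (Real.one_le_sqrt.2 (by simp))
    positivity
  have inv_weight_eq_top : ∫⁻ ξ : E, .ofReal (weight √(1 + ‖ξ‖ ^ 2))⁻¹ ∂μ = ∞ := by
    refine lintegral_sqrt_one_add_norm_sq_eq_top μ (F := fun t ↦ .ofReal (weight t)⁻¹)
      (by fun_prop) ha <| (setLIntegral_congr_fun measurableSet_Ioi fun t ht ↦ ?_).trans hH
    have ht0 : 0 < t := by linarith [mem_Ioi.1 ht]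
    dsimp only [weight]
    obtain ⟨k, hk⟩ : ∃ k, finrank ℝ E = k + 1 :=
      Nat.exists_eq_succ_of_ne_zero finrank_pos.ne'
    rw [← ENNReal.ofReal_mul (by positivity), hk, Nat.add_sub_cancel, pow_succ]
    field_simp
  obtain ⟨g, hg, hg_nonneg, hg_sq, hg_top⟩ :=
    exists_lintegral_mul_rpow_lt_top_lintegral_eq_top .two_two μ
      (w := fun ξ ↦ weight √(1 + ‖ξ‖ ^ 2)) (by fun_prop) hweight_pos
      (by norm_num [Real.rpow_neg_one, inv_weight_eq_top])
  refine ⟨g, hg, hg_nonneg, ?_, hg_top⟩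
  simpa only [weight, Real.rpow_natCast, Real.rpow_two] using hg_sq

/-- Sharpness of the Hörmander condition (necessity): if `∫₁^∞ dt/(t φ(t)²) = ∞` then the
weighted space `L²(⟨ξ⟩ⁿ φ(⟨ξ⟩)² dξ)` is not contained in `L¹(ℝⁿ)`. -/
theorem exists_not_integrable_of_hormander_condition_fails
    (φ : ℝ → ℝ) (hφ : SlowlyVaryingM φ)
    (hH : (∫⁻ t in Set.Ioi (1:ℝ), ENNReal.ofReal (1 / (t * φ t ^ 2))) = ⊤)
    (n : ℕ) (hn : 1 ≤ n) :
    ∃ g : EuclideanSpace ℝ (Fin n) → ℝ, Measurable g ∧ (∀ ξ, 0 ≤ g ξ) ∧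
      (∫⁻ ξ, ENNReal.ofReal
          (jbracket ξ ^ (n : ℝ) * φ (jbracket ξ) ^ 2 * g ξ ^ 2)) < ⊤ ∧
      (∫⁻ ξ, ENNReal.ofReal (g ξ)) = ⊤ := by
  have : Nonempty (Fin n) := ⟨⟨0, hn⟩⟩
  have h := exists_not_integrable_of_hormander_condition_fails_general
    (volume : Measure (EuclideanSpace ℝ (Fin n))) hφ.1 (fun t ht ↦ (hφ.2.1 t ht).ne') one_lt_two
    (hφ.lintegral_Ioi_eq_top hH one_lt_two)
  rwa [finrank_euclideanSpace_fin] at h
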